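/- Let $(\Omega, \mathcal{F})$ carry probability measures $\tilde{p}_0 \ll p_0$ with $D(\tilde{p}_0 \,\|\, p_0) < \infty$. Let $W_{obs}, W : \Omega \to \mathbb{R}$ be random variables (representing $Y w^{obs}$ and $Y w$ respectively), with $W_{obs}$ integrable under both $\tilde{p}_0$ and $p_0$ and $W$ integrable under $p_0$. Suppose: (i) there exists $\nu_0 > 0$ with $\log \mathbb{E}_{p_0}[\exp(\lambda(W_{obs} - \mathbb{E}_{p_0}[W_{obs}]))] \le \nu_0 \lambda^2/2$ for all $\lambda > 0$; and (ii) there is a constant $B \ge 0$ with $\mathbb{E}_{p_0}[W_{obs}] - \mathbb{E}_{p_0}[W] \le B$. Then the bias satisfies $\mathbb{E}_{\tilde{p}_0}[W_{obs}] - \mathbb{E}_{p_0}[W] \le B + \sqrt{2 \nu_0 \, D(\tilde{p}_0 \,\|\, p_0)}$. -/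

import Mathlib

/-!
The argument is the Donsker–Varadhan inequality followed by a Chernoff-type optimisation.

For `f` with `exp f` integrable under `P`, let `P_f` be the exponentially tilted measure with
density `exp f / E_P[exp f]`. Then `D(Q ‖ P_f) = D(Q ‖ P) - E_Q[f] + log E_P[exp f]`, and Gibbs'
inequality `D(Q ‖ P_f) ≥ 0` gives `E_Q[f] ≤ D(Q ‖ P) + log E_P[exp f]`
(`integral_le_klDiv_add_log_integral_exp`).

Apply this with `f = t (W_obs - E_{p₀}[W_obs])`, `t > 0`. Writing
`d = E_{p̃₀}[W_obs] - E_{p₀}[W_obs]`, the sub-Gaussian hypothesis yields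
`t d ≤ D(p̃₀ ‖ p₀) + ν₀ t² / 2`. If `d > 0`, the optimal choice `t = d / ν₀` gives
`d² ≤ 2 ν₀ D(p̃₀ ‖ p₀)`; if `d ≤ 0` there is nothing to prove. The regret bound accounts for the
remaining `B`.
-/

open MeasureTheory Real

/-- The Kullback–Leibler divergence `D(Q ‖ P) = ∫ log (dQ/dP) dQ` (real-valued). -/
noncomputable def klDiv {Ω : Type*} [MeasurableSpace Ω] (Q P : Measure Ω) : ℝ :=
  ∫ x, Real.log ((Q.rnDeriv P) x).toReal ∂Q

/-- The **Donsker–Varadhan inequality**: Gibbs' inequality for `Q` relative to the tilted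
measure `P.tilted f`. -/
lemma integral_le_klDiv_add_log_integral_exp {Ω : Type*} [MeasurableSpace Ω] {Q P : Measure Ω}
    [IsProbabilityMeasure Q] [IsProbabilityMeasure P] (hac : Q ≪ P)
    (hkl : Integrable (llr Q P) Q) {f : Ω → ℝ} (hfQ : Integrable f Q)
    (hfP : Integrable (fun x => Real.exp (f x)) P) :
    ∫ x, f x ∂Q ≤ klDiv Q P + Real.log (∫ x, Real.exp (f x) ∂P) := by
  have := isProbabilityMeasure_tilted hfP
  have hgibbs := InformationTheory.integral_llr_add_sub_measure_univ_nonneg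
    (hac.trans (absolutelyContinuous_tilted hfP))
    (integrable_llr_tilted_right hac hfQ hkl hfP)
  rw [integral_llr_tilted_right hac hfQ hfP hkl] at hgibbs
  have hD : klDiv Q P = ∫ x, llr Q P x ∂Q := rfl
  simp only [probReal_univ] at hgibbs
  linarith

/-- Bias bound for the embedded permutation weighting estimator: if `W_obs = Y w^{obs}`
satisfies a sub-Gaussian moment generating function bound under the true logging
distribution `p₀`, and the classifier-regret term bounds
`E_{p₀}[W_obs] - E_{p₀}[W] ≤ B`, then the bias decomposes as
`E_{p̃₀}[W_obs] - E_{p₀}[W] ≤ B + √(2 ν₀ D(p̃₀ ‖ p₀))`. -/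
theorem bias_bound_embedded_pw
    {Ω : Type*} [MeasurableSpace Ω] (p0t p0 : Measure Ω)
    [IsProbabilityMeasure p0t] [IsProbabilityMeasure p0]
    (hac : p0t ≪ p0)
    (hkl : Integrable (fun x => Real.log ((p0t.rnDeriv p0) x).toReal) p0t)
    (Wobs W : Ω → ℝ)
    (hWobs0 : Integrable Wobs p0) (hWobs0t : Integrable Wobs p0t)
    (hW0 : Integrable W p0)
    (ν0 : ℝ) (hν0 : 0 < ν0)
    (hmgf : ∀ t : ℝ, 0 < t →
      Integrable (fun ω => Real.exp (t * (Wobs ω - ∫ x, Wobs x ∂p0))) p0 ∧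
      Real.log (∫ ω, Real.exp (t * (Wobs ω - ∫ x, Wobs x ∂p0)) ∂p0) ≤ ν0 * t ^ 2 / 2)
    (B : ℝ) (hB : 0 ≤ B)
    (hregret : ∫ x, Wobs x ∂p0 - ∫ x, W x ∂p0 ≤ B) :
    ∫ x, Wobs x ∂p0t - ∫ x, W x ∂p0 ≤ B + Real.sqrt (2 * ν0 * klDiv p0t p0) := by
  have hsub : ∀ t : ℝ, 0 < t →
      t * (∫ x, Wobs x ∂p0t - ∫ x, Wobs x ∂p0) ≤ klDiv p0t p0 + ν0 * t ^ 2 / 2 := by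
    intro t ht
    have hdv := integral_le_klDiv_add_log_integral_exp hac hkl
      ((hWobs0t.sub (integrable_const (∫ x, Wobs x ∂p0))).const_mul t) (hmgf t ht).1
    have hmean : ∫ ω, t * (Wobs ω - ∫ x, Wobs x ∂p0) ∂p0t
        = t * (∫ x, Wobs x ∂p0t - ∫ x, Wobs x ∂p0) := by
      rw [integral_const_mul, integral_sub hWobs0t (integrable_const _)]
      simp
    have hlog := (hmgf t ht).2
    simp only [Pi.sub_apply] at hdv
    linarith
  set d := ∫ x, Wobs x ∂p0t - ∫ x, Wobs x ∂p0 with hd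
  have hshift : d ≤ Real.sqrt (2 * ν0 * klDiv p0t p0) := by
    rcases le_or_gt d 0 with hneg | hpos
    · exact hneg.trans (Real.sqrt_nonneg _)
    · apply Real.le_sqrt_of_sq_le
      -- `t = d / ν0` maximises `t * d - ν0 * t ^ 2 / 2`.
      have hopt := hsub (d / ν0) (div_pos hpos hν0)
      have hval : d / ν0 * d - ν0 * (d / ν0) ^ 2 / 2 = d ^ 2 / (2 * ν0) := by
        field_simp
        ring
      have hle : d ^ 2 / (2 * ν0) ≤ klDiv p0t p0 := by linarith
      rw [div_le_iff₀ (by positivity)] at hle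
      linarith
  linarith
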